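/- Let G=(V,E) be a finite tree with a graph tensor network in Vidal form on it. Then the following are equivalent: (i) for every directed edge a→b of G, the family of Schmidt vectors {u_{a→b}(j)}_{j=0}^{d_ab−1} is orthonormal; (ii) for every directed edge a→b of G, the local orthogonality condition holds, i.e. for all j,j'∈{0,…,d_ab−1}: δ_{j,j'} = Σ_{i_a∈{0,1}} Σ_{(j_{ca})_{c∈∂a\{b}}} Γ_a[i_a,(j_{ca})_{c∈∂a\{b}}, j]·Γ_a*[i_a,(j_{ca})_{c∈∂a\{b}}, j']·Π_{c∈∂a\{b}} λ_ca[j_ca]². In particular, under either condition, for every edge {a,b} the expansion Ψ = Σ_{j} λ_ab[j]·u_{a→b}(j) ⊗ u_{b→a}(j) is a Schmidt decomposition of Ψ with respect to the bipartition of V induced by cutting the edge {a,b}. -/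

import Mathlib

/-! The Gram matrix of the Schmidt vectors of a branch `a→b` is itself a tree tensor network on that
branch: summing the physical indices first (`gram_eq`), its bond values are pairs of bond values,
its vertex tensors are the overlaps of `Γ_c` with itself and its edge weights are
`λ_e[k] λ_e[k']`. In a tree, the branch `a→b` is the disjoint union of its root `a` and of the
branches `c→a` through the other neighbours `c` of `a` (`mem_branchV_iff`, `mem_branchE_iff`), so
its contraction is obtained by contracting those branches separately and then summing over the
edges at `a` (`branchSum_eq`).

If the Gram matrices of all the branches `c→a` are identities, only equal pairs survive in this
last sum, and what is left is exactly the right-hand side of the local orthogonality condition at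
`a→b` (`branchSum_eq_localSum`). Hence orthonormality at all directed edges gives local
orthogonality, and the converse is an induction on the number of vertices of the branch
(`branchOrtho_of_localOrtho`).

The Schmidt expansion needs no orthogonality: an edge `{a,b}` of a tree splits the vertices and the
remaining edges into the two branches, so for each value of its index the sum defining `Ψ`
is a product of two sums (`pinSum_univ_eq`, `psi_eq`).

All sums over bond indices are written with assignments defined on the whole edge set, the indices
that are not summed being pinned to a given assignment; this avoids transporting functions between
subtypes of edges.
-/

open scoped BigOperators

variable {V : Type*} [Fintype V] [DecidableEq V]

/-- A graph tensor network in Vidal form on a finite simple graph `G`: a bond dimension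
`d e ≥ 1` and a nonnegative vector `lam e` (the entries `lam e k` for `k < d e` being the
relevant ones) for each edge `e`, and for each vertex `a` a tensor `Γ a` taking a physical
index in `Fin 2` and a bond index for each edge incident to `a`. -/
structure VidalNet (G : SimpleGraph V) [DecidableRel G.Adj] where
  d : G.edgeSet → ℕ
  d_pos : ∀ e, 0 < d e
  lam : G.edgeSet → ℕ → ℝ
  lam_nonneg : ∀ e k, 0 ≤ lam e k
  Γ : ∀ a : V, Fin 2 → ({e : G.edgeSet // a ∈ (e : Sym2 V)} → ℕ) → ℂ

/-- `branchV G a b` is the vertex set `V_{b→a}` of the connected component of `b` in the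
graph `G` with the edge `{a,b}` removed. -/
def branchV (G : SimpleGraph V) (a b : V) : Set V :=
  {c | (G.deleteEdges {s(a, b)}).Reachable b c}

/-- `branchE G a b` is the edge set `E_{b→a}` of the connected component of `b` in the
graph `G` with the edge `{a,b}` removed. -/
def branchE (G : SimpleGraph V) [DecidableRel G.Adj] (a b : V) : Set G.edgeSet :=
  {e | (e : Sym2 V) ≠ s(a, b) ∧ ∀ x ∈ (e : Sym2 V), x ∈ branchV G a b}

namespace VidalNet

variable {G : SimpleGraph V} [DecidableRel G.Adj]

/-- The state represented by a graph tensor network in Vidal form: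
`Ψ[(i_a)] = Σ_j (Π_{a∈V} Γ_a[i_a,(j_{ab})_{b∈∂a}])·(Π_{e∈E} λ_e[j_e])`. -/
noncomputable def psi (net : VidalNet G) (i : V → Fin 2) : ℂ :=
  ∑ j ∈ Fintype.piFinset (fun e : G.edgeSet => Finset.range (net.d e)),
    (∏ a : V, net.Γ a (i a) (fun e => j e.1)) * ∏ e : G.edgeSet, (net.lam e (j e) : ℂ)

open scoped Classical in
/-- The Schmidt vector `u_{a→b}(j)` of the subtree `V_{a→b}` of `a` (the connected component
of `a` in the graph with the edge `{a,b}` removed). -/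
noncomputable def schmidt (net : VidalNet G) (a b : V) (j : ℕ) :
    ({c : V // c ∈ branchV G b a} → Fin 2) → ℂ := fun i =>
  ∑ k ∈ Fintype.piFinset (fun e : {e : G.edgeSet // e ∈ branchE G b a} =>
      Finset.range (net.d e.1)),
    (∏ c : {c : V // c ∈ branchV G b a},
        net.Γ c.1 (i c)
          (fun e => if (e.1 : Sym2 V) = s(a, b) then j
            else if h : e.1 ∈ branchE G b a then k ⟨e.1, h⟩ else 0)) *
      ∏ e : {e : G.edgeSet // e ∈ branchE G b a}, (net.lam e.1 (k e) : ℂ)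

open scoped Classical in
/-- The Gram matrix `G_{a→b}[j,j'] = ⟨u_{a→b}(j'), u_{a→b}(j)⟩` of the Schmidt vectors,
conjugate-linear in the first argument. -/
noncomputable def gram (net : VidalNet G) (a b : V) (j j' : ℕ) : ℂ :=
  ∑ i : ({c : V // c ∈ branchV G b a} → Fin 2),
    (starRingEnd ℂ) (net.schmidt a b j' i) * net.schmidt a b j i

/-- The local orthogonality condition at the directed edge `a → b`. -/
def LocalOrtho (net : VidalNet G) {a b : V} (hab : G.Adj a b) : Prop :=
  ∀ j j' : ℕ, j < net.d ⟨s(a, b), (SimpleGraph.mem_edgeSet G).mpr hab⟩ →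
    j' < net.d ⟨s(a, b), (SimpleGraph.mem_edgeSet G).mpr hab⟩ →
    (if j = j' then (1 : ℂ) else 0) =
      ∑ ia : Fin 2,
        ∑ g ∈ Fintype.piFinset
            (fun e : {e : {e : G.edgeSet // a ∈ (e : Sym2 V)} // (e.1 : Sym2 V) ≠ s(a, b)} =>
              Finset.range (net.d e.1.1)),
          net.Γ a ia (fun e => if h : (e.1 : Sym2 V) = s(a, b) then j else g ⟨e, h⟩) *
            (starRingEnd ℂ)
              (net.Γ a ia (fun e => if h : (e.1 : Sym2 V) = s(a, b) then j' else g ⟨e, h⟩)) *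
            ∏ e : {e : {e : G.edgeSet // a ∈ (e : Sym2 V)} // (e.1 : Sym2 V) ≠ s(a, b)},
              ((net.lam e.1.1 (g e) : ℂ)) ^ 2

end VidalNet

/-! ### Sums over part of the indices -/

section PinnedSums

variable {E X R : Type*} [Fintype E] [DecidableEq E] [CommSemiring R]

/-- The assignments `k` that take values in `B e` for `e ∈ S` and agree with `x` off `S`. -/
def pinned (B : E → Finset X) (S : Finset E) (x : E → X) : Finset (E → X) :=
  Fintype.piFinset fun e => if e ∈ S then B e else {x e}

/-- Sum of `F` over the indices in `S`, the remaining indices being fixed by `x`. -/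
def pinSum (B : E → Finset X) (S : Finset E) (F : (E → X) → R) (x : E → X) : R :=
  ∑ k ∈ pinned B S x, F k

lemma mem_pinned {B : E → Finset X} {S : Finset E} {x k : E → X} :
    k ∈ pinned B S x ↔ (∀ e ∈ S, k e ∈ B e) ∧ ∀ e ∉ S, k e = x e := by
  simp only [pinned, Fintype.mem_piFinset]
  constructor
  · intro h
    refine ⟨fun e he => by simpa [he] using h e, fun e he => by simpa [he] using h e⟩
  · rintro ⟨h1, h2⟩ e
    by_cases he : e ∈ S
    · simpa [he] using h1 e he
    · simpa [he] using h2 e he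

lemma pinSum_union (B : E → Finset X) {S T : Finset E} (hST : Disjoint S T)
    (F : (E → X) → R) (x : E → X) :
    pinSum B (S ∪ T) F x = pinSum B S (fun k => pinSum B T F k) x := by
  unfold pinSum
  rw [Finset.sum_sigma']
  have hd : ∀ e ∈ S, e ∉ T := fun e h h' => Finset.disjoint_left.mp hST h h'
  refine Finset.sum_bij' (fun k _ => ⟨T.piecewise x k, k⟩) (fun p _ => p.2) ?_ ?_ ?_ ?_ ?_
  · intro k hk
    rw [mem_pinned] at hk
    simp only [Finset.mem_sigma, mem_pinned]
    refine ⟨⟨fun e he => ?_, fun e he => ?_⟩, fun e he => ?_, fun e he => ?_⟩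
    · rw [Finset.piecewise_eq_of_notMem _ _ _ (hd e he)]
      exact hk.1 e (Finset.mem_union_left _ he)
    · by_cases heT : e ∈ T
      · simp [heT]
      · simpa [heT] using hk.2 e (by simp [he, heT])
    · exact hk.1 e (Finset.mem_union_right _ he)
    · simp [he]
  · rintro ⟨k, l⟩ h
    simp only [Finset.mem_sigma, mem_pinned] at h ⊢
    obtain ⟨⟨h1, h2⟩, h3, h4⟩ := h
    refine ⟨fun e he => ?_, fun e he => ?_⟩
    · by_cases heT : e ∈ T
      · exact h3 e heT
      · rw [h4 e heT]
        exact h1 e (by simpa [heT] using he)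
    · simp only [Finset.mem_union, not_or] at he
      rw [h4 e he.2, h2 e he.1]
  · intro k hk; rfl
  · rintro ⟨k, l⟩ h
    simp only [Finset.mem_sigma, mem_pinned] at h
    obtain ⟨⟨h1, h2⟩, h3, h4⟩ := h
    have : T.piecewise x l = k := by
      funext e
      by_cases heT : e ∈ T
      · simpa [heT] using (h2 e (fun h => hd e h heT)).symm
      · simpa [heT] using h4 e heT
    simp [this]
  · intro k hk; rfl

lemma pinSum_mul (B : E → Finset X) {S T : Finset E} (hST : Disjoint S T)
    {F H : (E → X) → R} (hF : DependsOn F {e | e ∉ T}) (hH : DependsOn H {e | e ∉ S})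
    (x : E → X) :
    pinSum B (S ∪ T) (fun k => F k * H k) x = pinSum B S F x * pinSum B T H x := by
  have hd : ∀ e ∈ S, e ∉ T := fun e h h' => Finset.disjoint_left.mp hST h h'
  rw [pinSum_union B hST]
  unfold pinSum
  rw [Finset.sum_mul]
  refine Finset.sum_congr rfl fun k hk => ?_
  rw [mem_pinned] at hk
  rw [Finset.mul_sum]
  refine Finset.sum_bij' (fun l _ => T.piecewise l x) (fun l _ => T.piecewise l k) ?_ ?_ ?_ ?_ ?_
  · intro l hl
    rw [mem_pinned] at hl ⊢
    exact ⟨fun e he => by simpa [he] using hl.1 e he, fun e he => by simp [he]⟩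
  · intro l hl
    rw [mem_pinned] at hl ⊢
    exact ⟨fun e he => by simpa [he] using hl.1 e he, fun e he => by simp [he]⟩
  · intro l hl
    rw [mem_pinned] at hl
    funext e
    by_cases he : e ∈ T
    · simp [he]
    · simp [he, hl.2 e he]
  · intro l hl
    rw [mem_pinned] at hl
    funext e
    by_cases he : e ∈ T
    · simp [he]
    · simp [he, hl.2 e he]
  · intro l hl
    rw [mem_pinned] at hl
    congr 1
    · exact hF fun e he => hl.2 e he
    · refine hH fun e he => ?_
      by_cases heT : e ∈ T
      · simp [heT]
      · rw [hl.2 e heT, hk.2 e he]; simp [heT]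

lemma pinSum_empty (B : E → Finset X) (F : (E → X) → R) (x : E → X) :
    pinSum B ∅ F x = F x := by
  have : pinned B ∅ x = {x} := by
    ext k; simp [mem_pinned, funext_iff]
  simp [pinSum, this]

lemma pinSum_singleton (B : E → Finset X) (e : E) (F : (E → X) → R) (x : E → X) :
    pinSum B {e} F x = ∑ v ∈ B e, F (Function.update x e v) := by
  refine Finset.sum_bij' (fun k _ => k e) (fun v _ => Function.update x e v) ?_ ?_ ?_ ?_ ?_
  · intro k hk; exact (mem_pinned.mp hk).1 e (by simp)
  · intro v hv
    refine mem_pinned.mpr ⟨fun f hf => ?_, fun f hf => ?_⟩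
    · obtain rfl := Finset.mem_singleton.mp hf
      simpa using hv
    · exact Function.update_of_ne (by simpa using hf) _ _
  · intro k hk
    funext f
    by_cases hf : f = e
    · subst hf; simp
    · rw [Function.update_of_ne hf, (mem_pinned.mp hk).2 f (by simpa using hf)]
  · intro v hv; simp
  · intro k hk
    congr 1
    funext f
    by_cases hf : f = e
    · subst hf; simp
    · rw [Function.update_of_ne hf, (mem_pinned.mp hk).2 f (by simpa using hf)]

/-- Factors whose summation indices are pairwise disjoint, each factor being independent of the
summation indices of the others, can be summed separately. -/
lemma pinSum_prod {ι : Type*} [DecidableEq ι] (B : E → Finset X) (N : Finset ι)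
    (S : ι → Finset E) (F : ι → (E → X) → R)
    (hS : ∀ c ∈ N, ∀ c' ∈ N, c ≠ c' → Disjoint (S c) (S c'))
    (hF : ∀ c ∈ N, ∀ c' ∈ N, c ≠ c' → DependsOn (F c) {e | e ∉ S c'}) (x : E → X) :
    pinSum B (N.biUnion S) (fun k => ∏ c ∈ N, F c k) x = ∏ c ∈ N, pinSum B (S c) (F c) x := by
  induction N using Finset.induction_on with
  | empty => simp [pinSum_empty]
  | insert c N hc ih =>
    have hne : ∀ c' ∈ N, c ≠ c' := fun c' h h' => hc (h' ▸ h)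
    rw [Finset.biUnion_insert, Finset.prod_insert hc,
      ← ih (fun d hd d' hd' => hS d (Finset.mem_insert_of_mem hd) d' (Finset.mem_insert_of_mem hd'))
        (fun d hd d' hd' => hF d (Finset.mem_insert_of_mem hd) d' (Finset.mem_insert_of_mem hd')),
      ← pinSum_mul]
    · simp only [Finset.prod_insert hc]
    · rw [Finset.disjoint_biUnion_right]
      exact fun c' h => hS c (by simp) c' (by simp [h]) (hne c' h)
    · intro k l hkl
      -- `F c` ignores each `S c'` separately, so the coordinates are changed one `S c'` at a time.
      have key : ∀ M ⊆ N, ∀ k l : E → X, (∀ e ∉ M.biUnion S, k e = l e) → F c k = F c l := by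
        intro M
        induction M using Finset.induction_on with
        | empty =>
          intro _ k l h
          rw [funext fun e => h e (by simp)]
        | insert d M _ ihM =>
          intro hM k l h
          have hd : d ∈ N := hM (by simp)
          rw [hF c (by simp) d (by simp [hd]) (hne d hd)
            (y := (S d).piecewise l k) (fun e he => by
              have : e ∉ S d := he
              simp [this])]
          refine ihM (fun y hy => hM (by simp [hy])) _ _ fun e he => ?_
          by_cases hed : e ∈ S d
          · simp [hed]
          · simp only [hed, not_false_eq_true, Finset.piecewise_eq_of_notMem]
            exact h e (by rw [Finset.biUnion_insert]; simp only [Finset.mem_union]; tauto)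
      exact key N subset_rfl k l fun e he => hkl e he
    · intro k l hkl
      exact Finset.prod_congr rfl fun c' h =>
        hF c' (by simp [h]) c (by simp) (hne c' h).symm hkl

lemma pinSum_congr (B : E → Finset X) {S : Finset E} {F H : (E → X) → R} {x : E → X}
    (h : ∀ k ∈ pinned B S x, F k = H k) : pinSum B S F x = pinSum B S H x :=
  Finset.sum_congr rfl h

lemma pinSum_const_mul (B : E → Finset X) {S : Finset E} {F H : (E → X) → R} {x : E → X}
    (h : DependsOn F {e | e ∉ S}) :
    pinSum B S (fun k => F k * H k) x = F x * pinSum B S H x := by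
  unfold pinSum
  rw [Finset.mul_sum]
  exact Finset.sum_congr rfl fun k hk =>
    congrArg (· * H k) (h fun e he => (mem_pinned.mp hk).2 e he)

/-- A sum over assignments of the indices in a subtype, extended by `x`, is a pinned sum. -/
lemma sum_subtype_eq_pinSum {p : E → Prop} [DecidablePred p] [Fintype {e // p e}]
    [DecidableEq {e // p e}] (B : E → Finset X) (F : (E → X) → R) (x : E → X) :
    ∑ k ∈ Fintype.piFinset (fun e : {e // p e} => B e.1),
        F (fun e => if h : p e then k ⟨e, h⟩ else x e) =
      pinSum B (Finset.univ.filter p) F x := by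
  refine Finset.sum_bij' (fun k _ e => if h : p e then k ⟨e, h⟩ else x e)
    (fun k _ e => k e.1) ?_ ?_ ?_ ?_ ?_
  · intro k hk
    rw [Fintype.mem_piFinset] at hk
    refine mem_pinned.mpr ⟨fun e he => ?_, fun e he => ?_⟩
    · have : p e := by simpa using he
      simpa [this] using hk ⟨e, this⟩
    · have : ¬ p e := by simpa using he
      simp [this]
  · intro k hk
    rw [Fintype.mem_piFinset]
    exact fun e => (mem_pinned.mp hk).1 e.1 (by simpa using e.2)
  · intro k hk
    funext e; simp [e.2]
  · intro k hk
    funext e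
    by_cases h : p e
    · simp [h]
    · simpa [h] using ((mem_pinned.mp hk).2 e (by simpa using h)).symm
  · intro k hk; rfl

/-- A product of two pinned sums over the same indices is a pinned sum over pairs. -/
lemma sum_pinned_prod (B : E → Finset X) (S : Finset E) (F : (E → X) → (E → X) → R)
    (x y : E → X) :
    ∑ k ∈ pinned B S x, ∑ l ∈ pinned B S y, F k l =
      pinSum (fun e => B e ×ˢ B e) S (fun q => F (fun e => (q e).1) (fun e => (q e).2))
        (fun e => (x e, y e)) := by
  rw [← Finset.sum_product']
  refine Finset.sum_bij' (fun p _ e => (p.1 e, p.2 e))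
    (fun q _ => (fun e => (q e).1, fun e => (q e).2)) ?_ ?_ ?_ ?_ ?_
  · rintro ⟨k, l⟩ h
    simp only [Finset.mem_product, mem_pinned] at h ⊢
    exact ⟨fun e he => ⟨h.1.1 e he, h.2.1 e he⟩, fun e he => by rw [h.1.2 e he, h.2.2 e he]⟩
  · intro q h
    simp only [Finset.mem_product, mem_pinned] at h ⊢
    exact ⟨⟨fun e he => (h.1 e he).1, fun e he => by rw [h.2 e he]⟩,
      fun e he => (h.1 e he).2, fun e he => by rw [h.2 e he]⟩
  · intros; rfl
  · intros; rfl
  · intros; rfl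

end PinnedSums

/-! ### Branches of a tree -/

section TreeCuts

variable {V : Type*} {G : SimpleGraph V}

lemma mem_branchV {a b c : V} :
    c ∈ branchV G b a ↔ (G.deleteEdges {s(a, b)}).Reachable a c := by
  rw [branchV, Sym2.eq_swap]; rfl

lemma self_mem_branchV (a b : V) : a ∈ branchV G b a :=
  mem_branchV.mpr (SimpleGraph.Reachable.refl a)

lemma notMem_branchV (hG : G.IsTree) {a b : V} (hab : G.Adj a b) : b ∉ branchV G b a := by
  rw [mem_branchV]
  have := SimpleGraph.isAcyclic_iff_forall_adj_isBridge.mp hG.isAcyclic hab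
  simpa [SimpleGraph.isBridge_iff] using this

lemma branchV_closed {a b x y : V} (hx : x ∈ branchV G b a) (hxy : G.Adj x y)
    (hne : s(x, y) ≠ s(a, b)) : y ∈ branchV G b a := by
  rw [mem_branchV] at hx ⊢
  refine hx.trans (SimpleGraph.Adj.reachable ?_)
  rw [SimpleGraph.deleteEdges_adj]
  exact ⟨hxy, by simpa using hne⟩

lemma mem_of_reachable_of_closed {H : SimpleGraph V} {W : Set V}
    (hW : ∀ x y, x ∈ W → H.Adj x y → y ∈ W) {x y : V} (hx : x ∈ W) (h : H.Reachable x y) :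
    y ∈ W := by
  obtain ⟨p⟩ := h
  induction p with
  | nil => exact hx
  | cons h _ ih => exact ih (hW _ _ hx h)

lemma branchV_or (hG : G.IsTree) (a b x : V) : x ∈ branchV G b a ∨ x ∈ branchV G a b := by
  refine mem_of_reachable_of_closed (W := {x | x ∈ branchV G b a ∨ x ∈ branchV G a b})
    (x := a) ?_ (Or.inl (self_mem_branchV a b)) (hG.connected.preconnected a x)
  intro x y hx hxy
  by_cases h : s(x, y) = s(a, b)
  · rcases Sym2.eq_iff.mp h with ⟨rfl, rfl⟩ | ⟨rfl, rfl⟩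
    · exact Or.inr (self_mem_branchV _ _)
    · exact Or.inl (self_mem_branchV _ _)
  · exact hx.imp (fun h' => branchV_closed h' hxy h)
      (fun h' => branchV_closed h' hxy (by rwa [Sym2.eq_swap (a := b)]))

lemma branchV_disjoint (hG : G.IsTree) {a b x : V} (hab : G.Adj a b)
    (h : x ∈ branchV G b a) (h2 : x ∈ branchV G a b) : False := by
  rw [mem_branchV] at h
  rw [mem_branchV, Sym2.eq_swap] at h2
  exact notMem_branchV hG hab (mem_branchV.mpr (h.trans h2.symm))

/-- Branches at `a` through distinct neighbours are disjoint. -/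
lemma branchV_unique (hG : G.IsTree) {a c c' x : V} (hc : G.Adj a c) (hc' : G.Adj a c')
    (hx : x ∈ branchV G a c) (hx' : x ∈ branchV G a c') : c = c' := by
  by_contra hne
  have hac' := notMem_branchV hG hc'.symm
  have hac := notMem_branchV hG hc.symm
  -- Travelling inside the branch through `c'` never meets `a`, hence never leaves the branch
  -- through `c`; so `c'`, and then its neighbour `a`, would lie in the branch through `c`.
  have key : c' ∈ branchV G a c ∧ c' ∈ branchV G a c' := by
    refine mem_of_reachable_of_closed (H := G.deleteEdges {s(c', a)})
      (W := {y | y ∈ branchV G a c ∧ y ∈ branchV G a c'}) ?_ ⟨hx, hx'⟩ (mem_branchV.mp hx').symm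
    rintro y z ⟨h1, h2⟩ hyz
    rw [SimpleGraph.deleteEdges_adj] at hyz
    have hz' : z ∈ branchV G a c' := branchV_closed h2 hyz.1 (by simpa using hyz.2)
    refine ⟨branchV_closed h1 hyz.1 fun h => ?_, hz'⟩
    rcases Sym2.eq_iff.mp h with ⟨_, rfl⟩ | ⟨rfl, _⟩
    · exact hac' hz'
    · exact hac' h2
  refine hac (branchV_closed key.1 hc'.symm fun h => ?_)
  rcases Sym2.eq_iff.mp h with ⟨h, _⟩ | ⟨h, h'⟩
  · exact hne h.symm
  · exact hc'.ne h.symm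

lemma exists_branchV (hG : G.IsTree) {a x : V} (hx : x ≠ a) :
    ∃ c, G.Adj a c ∧ x ∈ branchV G a c := by
  have : x ∈ {x | x = a ∨ ∃ c, G.Adj a c ∧ x ∈ branchV G a c} := by
    refine mem_of_reachable_of_closed (x := a) ?_ (Or.inl rfl) (hG.connected.preconnected a x)
    rintro y z (rfl | ⟨c, hc, hy⟩) hyz
    · exact Or.inr ⟨z, hyz, self_mem_branchV _ _⟩
    · by_cases h : s(y, z) = s(c, a)
      · rcases Sym2.eq_iff.mp h with ⟨rfl, rfl⟩ | ⟨rfl, rfl⟩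
        · exact Or.inl rfl
        · exact Or.inr ⟨z, hc, self_mem_branchV _ _⟩
      · exact Or.inr ⟨c, hc, branchV_closed hy hyz h⟩
  exact this.resolve_left hx

/-- `V_{c→a} ⊆ V_{a→b}` for a neighbour `c ≠ b` of `a`. -/
lemma branchV_subset (hG : G.IsTree) {a b c : V} (hab : G.Adj a b) (hc : G.Adj a c)
    (hcb : c ≠ b) {x : V} (hx : x ∈ branchV G a c) : x ∈ branchV G b a :=
  (branchV_or hG a b x).resolve_right fun h => hcb (branchV_unique hG hc hab hx h)

/-- `V_{a→b}` consists of `a` and the branches `V_{c→a}` through the neighbours `c ≠ b`. -/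
lemma mem_branchV_iff (hG : G.IsTree) {a b : V} (hab : G.Adj a b) {x : V} :
    x ∈ branchV G b a ↔ x = a ∨ ∃ c, (G.Adj a c ∧ c ≠ b) ∧ x ∈ branchV G a c := by
  constructor
  · intro hx
    by_cases h : x = a
    · exact Or.inl h
    · obtain ⟨c, hc, hxc⟩ := exists_branchV hG h
      refine Or.inr ⟨c, ⟨hc, ?_⟩, hxc⟩
      rintro rfl
      exact branchV_disjoint hG hab hx hxc
  · rintro (rfl | ⟨c, ⟨hc, hcb⟩, hx⟩)
    · exact self_mem_branchV _ _
    · exact branchV_subset hG hab hc hcb hx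

variable [DecidableRel G.Adj]

/-- An edge other than `{a,b}` with one endpoint in `V_{a→b}` belongs to `E_{a→b}`. -/
lemma mem_branchE_of_mem {a b c : V} {e : G.edgeSet} (hc : c ∈ branchV G b a)
    (hce : c ∈ (e : Sym2 V)) (hne : (e : Sym2 V) ≠ s(a, b)) : e ∈ branchE G b a := by
  refine ⟨by rwa [Sym2.eq_swap (a := b)], fun x hx => ?_⟩
  obtain ⟨e, he⟩ := e
  obtain ⟨d, rfl⟩ := Sym2.mem_iff_exists.mp hce
  rcases Sym2.mem_iff.mp hx with rfl | rfl
  · exact hc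
  · exact branchV_closed hc he hne

lemma ne_of_mem_branchE {a b : V} {e : G.edgeSet} (he : e ∈ branchE G b a) :
    (e : Sym2 V) ≠ s(a, b) := by
  rw [Sym2.eq_swap]; exact he.1

lemma exists_mem_edge {V : Type*} {G : SimpleGraph V} (e : G.edgeSet) : ∃ x, x ∈ (e : Sym2 V) := by
  obtain ⟨e, he⟩ := e
  induction e with
  | _ x y => exact ⟨x, by simp⟩

lemma branchE_or (hG : G.IsTree) {a b : V} (e : G.edgeSet) (hne : (e : Sym2 V) ≠ s(a, b)) :
    e ∈ branchE G b a ∨ e ∈ branchE G a b := by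
  obtain ⟨x, hx⟩ := exists_mem_edge e
  exact (branchV_or hG a b x).imp (fun h => mem_branchE_of_mem h hx hne)
    (fun h => mem_branchE_of_mem h hx (by rwa [Sym2.eq_swap (a := b)]))

lemma branchE_disjoint (hG : G.IsTree) {a b : V} (hab : G.Adj a b) {e : G.edgeSet}
    (h : e ∈ branchE G b a) (h' : e ∈ branchE G a b) : False := by
  obtain ⟨x, hx⟩ := exists_mem_edge e
  exact branchV_disjoint hG hab (h.2 x hx) (h'.2 x hx)

lemma notMem_of_branchE (hG : G.IsTree) {a c : V} (hc : G.Adj a c) {e : G.edgeSet}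
    (h : e ∈ branchE G a c) : a ∉ (e : Sym2 V) :=
  fun ha => notMem_branchV hG hc.symm (h.2 a ha)

/-- `E_{a→b}` consists of the edges at `a` other than `{a,b}` and of the edge sets `E_{c→a}` for
the neighbours `c ≠ b` of `a`. -/
lemma mem_branchE_iff (hG : G.IsTree) {a b : V} (hab : G.Adj a b) {e : G.edgeSet} :
    e ∈ branchE G b a ↔ (a ∈ (e : Sym2 V) ∧ (e : Sym2 V) ≠ s(a, b)) ∨
      ∃ c, (G.Adj a c ∧ c ≠ b) ∧ e ∈ branchE G a c := by
  constructor
  · intro he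
    by_cases ha : a ∈ (e : Sym2 V)
    · exact Or.inl ⟨ha, ne_of_mem_branchE he⟩
    · obtain ⟨x, hx⟩ := exists_mem_edge e
      have hxa : x ≠ a := by rintro rfl; exact ha hx
      obtain ⟨c, hc, hxc⟩ := ((mem_branchV_iff hG hab).mp (he.2 x hx)).resolve_left hxa
      refine Or.inr ⟨c, hc, mem_branchE_of_mem hxc hx fun h => ha ?_⟩
      rw [h]; simp
  · rintro (⟨ha, hne⟩ | ⟨c, ⟨hc, hcb⟩, he⟩)
    · exact mem_branchE_of_mem (self_mem_branchV a b) ha hne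
    · obtain ⟨x, hx⟩ := exists_mem_edge e
      refine mem_branchE_of_mem (branchV_subset hG hab hc hcb (he.2 x hx)) hx fun h => ?_
      exact notMem_of_branchE hG hc he (by rw [h]; simp)

end TreeCuts

/-! ### Contraction of a tree tensor network -/

section Contraction

variable {V : Type*} [Fintype V] {G : SimpleGraph V}

open scoped Classical in
/-- `V_{a→b}` as a finset. -/
noncomputable def branchVerts (G : SimpleGraph V) (a b : V) : Finset V :=
  Finset.univ.filter (· ∈ branchV G b a)

lemma mem_branchVerts {a b x : V} : x ∈ branchVerts G a b ↔ x ∈ branchV G b a := by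
  simp [branchVerts]

lemma disjoint_branchVerts (hG : G.IsTree) {a c c' : V} (hc : G.Adj a c) (hc' : G.Adj a c')
    (hne : c ≠ c') : Disjoint (branchVerts G c a) (branchVerts G c' a) :=
  Finset.disjoint_left.mpr fun _ h h' =>
    hne (branchV_unique hG hc hc' (mem_branchVerts.mp h) (mem_branchVerts.mp h'))

variable [DecidableRel G.Adj]

open scoped Classical in
/-- `E_{a→b}` as a finset. -/
noncomputable def branchEdges (G : SimpleGraph V) [DecidableRel G.Adj] (a b : V) :
    Finset G.edgeSet :=
  Finset.univ.filter (· ∈ branchE G b a)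

lemma mem_branchEdges {a b : V} {e : G.edgeSet} :
    e ∈ branchEdges G a b ↔ e ∈ branchE G b a := by
  simp [branchEdges]

lemma disjoint_branchEdges (hG : G.IsTree) {a c c' : V} (hc : G.Adj a c) (hc' : G.Adj a c')
    (hne : c ≠ c') : Disjoint (branchEdges G c a) (branchEdges G c' a) := by
  refine Finset.disjoint_left.mpr fun e h h' => ?_
  obtain ⟨x, hx⟩ := exists_mem_edge e
  exact hne (branchV_unique hG hc hc' ((mem_branchEdges.mp h).2 x hx)
    ((mem_branchEdges.mp h').2 x hx))

variable [DecidableEq V]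

/-- The edges at `a` other than `{a,b}`. -/
def otherEdges (G : SimpleGraph V) [DecidableRel G.Adj] (a b : V) : Finset G.edgeSet :=
  Finset.univ.filter fun e => a ∈ (e : Sym2 V) ∧ (e : Sym2 V) ≠ s(a, b)

/-- The neighbours of `a` other than `b`. -/
def otherNbrs (G : SimpleGraph V) [DecidableRel G.Adj] (a b : V) : Finset V :=
  Finset.univ.filter fun c => G.Adj a c ∧ c ≠ b

lemma mem_otherEdges {a b : V} {e : G.edgeSet} :
    e ∈ otherEdges G a b ↔ a ∈ (e : Sym2 V) ∧ (e : Sym2 V) ≠ s(a, b) := by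
  simp [otherEdges]

lemma mem_otherNbrs {a b c : V} : c ∈ otherNbrs G a b ↔ G.Adj a c ∧ c ≠ b := by
  simp [otherNbrs]

lemma branchVerts_eq (hG : G.IsTree) {a b : V} (hab : G.Adj a b) :
    branchVerts G a b = insert a ((otherNbrs G a b).biUnion fun c => branchVerts G c a) := by
  ext x
  simp only [mem_branchVerts, Finset.mem_insert, Finset.mem_biUnion, mem_otherNbrs]
  exact mem_branchV_iff hG hab

lemma branchEdges_eq (hG : G.IsTree) {a b : V} (hab : G.Adj a b) :
    branchEdges G a b =
      otherEdges G a b ∪ (otherNbrs G a b).biUnion fun c => branchEdges G c a := by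
  ext x
  simp only [mem_branchEdges, Finset.mem_union, Finset.mem_biUnion, mem_otherNbrs, mem_otherEdges]
  exact mem_branchE_iff hG hab

lemma disjoint_otherEdges (hG : G.IsTree) {a b : V} :
    Disjoint (otherEdges G a b) ((otherNbrs G a b).biUnion fun c => branchEdges G c a) := by
  refine Finset.disjoint_left.mpr fun e h h' => ?_
  obtain ⟨c, hc, he⟩ := Finset.mem_biUnion.mp h'
  exact notMem_of_branchE hG (mem_otherNbrs.mp hc).1 (mem_branchEdges.mp he) (mem_otherEdges.mp h).1

variable {X : Type*}

/-- The summand of the tensor network with vertex set `U` and edge set `S`, for vertex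
tensors `A`, edge weights `w` and the bond assignment `k`. -/
def netTerm (A : V → (G.edgeSet → X) → ℂ) (w : G.edgeSet → X → ℂ) (U : Finset V)
    (S : Finset G.edgeSet) (k : G.edgeSet → X) : ℂ :=
  (∏ c ∈ U, A c k) * ∏ e ∈ S, w e (k e)

/-- The contraction of the branch `a→b`, as a function of the bond assignment `x` (of which only
the value on `{a,b}` matters). -/
noncomputable def branchSum (A : V → (G.edgeSet → X) → ℂ) (w : G.edgeSet → X → ℂ)
    (B : G.edgeSet → Finset X) (a b : V) (x : G.edgeSet → X) : ℂ :=
  pinSum B (branchEdges G a b) (netTerm A w (branchVerts G a b) (branchEdges G a b)) x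

variable {A : V → (G.edgeSet → X) → ℂ} {w : G.edgeSet → X → ℂ} {B : G.edgeSet → Finset X}

/-- The summand of the branch `a→b` only reads `{a,b}` and the edges of the branch. -/
lemma netTerm_dependsOn (hA : ∀ c, DependsOn (A c) {e | c ∈ (e : Sym2 V)}) (a b : V) :
    DependsOn (netTerm A w (branchVerts G a b) (branchEdges G a b))
      {e | (e : Sym2 V) = s(a, b) ∨ e ∈ branchEdges G a b} := by
  intro k l h
  unfold netTerm
  congr 1
  · refine Finset.prod_congr rfl fun c hc => hA c fun e he => h e ?_
    by_cases hne : (e : Sym2 V) = s(a, b)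
    · exact Or.inl hne
    · exact Or.inr (mem_branchEdges.mpr (mem_branchE_of_mem (mem_branchVerts.mp hc) he hne))
  · exact Finset.prod_congr rfl fun e he => by rw [h e (Or.inr he)]

/-- Splitting off the root: the contraction of the branch `a→b` in terms of those of the
branches `c→a` through the other neighbours `c` of `a`. -/
lemma branchSum_eq (hG : G.IsTree) (hA : ∀ c, DependsOn (A c) {e | c ∈ (e : Sym2 V)}) {a b : V}
    (hab : G.Adj a b) (x : G.edgeSet → X) :
    branchSum A w B a b x = pinSum B (otherEdges G a b) (fun k =>
      (A a k * ∏ e ∈ otherEdges G a b, w e (k e)) *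
        ∏ c ∈ otherNbrs G a b, branchSum A w B c a k) x := by
  have hadj : ∀ c ∈ otherNbrs G a b, G.Adj a c := fun c hc => (mem_otherNbrs.mp hc).1
  have hterm : netTerm A w (branchVerts G a b) (branchEdges G a b) = fun k =>
      (A a k * ∏ e ∈ otherEdges G a b, w e (k e)) *
        ∏ c ∈ otherNbrs G a b, netTerm A w (branchVerts G c a) (branchEdges G c a) k := by
    funext k
    unfold netTerm
    rw [branchVerts_eq hG hab, branchEdges_eq hG hab, Finset.prod_insert,
      Finset.prod_union (disjoint_otherEdges hG), Finset.prod_biUnion, Finset.prod_biUnion,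
      Finset.prod_mul_distrib]
    · ring
    · exact fun c hc c' hc' hne => disjoint_branchEdges hG (hadj c hc) (hadj c' hc') hne
    · exact fun c hc c' hc' hne => disjoint_branchVerts hG (hadj c hc) (hadj c' hc') hne
    · intro h
      obtain ⟨c, hc, hac⟩ := Finset.mem_biUnion.mp h
      exact notMem_branchV hG (hadj c hc).symm (mem_branchVerts.mp hac)
  have hroot : ∀ e ∈ (otherNbrs G a b).biUnion (fun c => branchEdges G c a), a ∉ (e : Sym2 V) := by
    intro e he
    obtain ⟨c, hc, hec⟩ := Finset.mem_biUnion.mp he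
    exact notMem_of_branchE hG (hadj c hc) (mem_branchEdges.mp hec)
  unfold branchSum
  rw [hterm, branchEdges_eq hG hab, pinSum_union B (disjoint_otherEdges hG)]
  refine pinSum_congr B fun k _ => ?_
  rw [pinSum_const_mul, pinSum_prod]
  · exact fun c hc c' hc' hne => disjoint_branchEdges hG (hadj c hc) (hadj c' hc') hne
  · intro c hc c' hc' hne k l h
    refine netTerm_dependsOn hA c a fun e he => h e fun hec' => ?_
    rcases he with he | he
    · exact notMem_of_branchE hG (hadj c' hc') (mem_branchEdges.mp hec') (by rw [he]; simp)
    · exact Finset.disjoint_left.mp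
        (disjoint_branchEdges hG (hadj c hc) (hadj c' hc') hne) he hec'
  · intro k l h
    exact congrArg₂ (· * ·) (hA a fun e he => h e fun h' => hroot e h' he)
      (Finset.prod_congr rfl fun e he =>
        by rw [h e fun h' => hroot e h' (mem_otherEdges.mp he).1])

/-- Cutting the edge `{a,b}`: the contraction of the whole network in terms of those of the two
branches. -/
lemma pinSum_univ_eq (hG : G.IsTree) (hA : ∀ c, DependsOn (A c) {e | c ∈ (e : Sym2 V)}) {a b : V}
    (e₀ : G.edgeSet) (he₀ : (e₀ : Sym2 V) = s(a, b)) (x : G.edgeSet → X) :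
    pinSum B Finset.univ (netTerm A w Finset.univ Finset.univ) x =
      ∑ v ∈ B e₀, w e₀ v * (branchSum A w B a b (Function.update x e₀ v) *
        branchSum A w B b a (Function.update x e₀ v)) := by
  have hab : G.Adj a b := by
    have := e₀.2; rwa [he₀] at this
  have hV : (Finset.univ : Finset V) = branchVerts G a b ∪ branchVerts G b a := by
    ext x
    simpa [mem_branchVerts] using branchV_or hG a b x
  have hVd : Disjoint (branchVerts G a b) (branchVerts G b a) :=
    Finset.disjoint_left.mpr fun x h h' =>
      branchV_disjoint hG hab (mem_branchVerts.mp h) (mem_branchVerts.mp h')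
  have hE : (Finset.univ : Finset G.edgeSet) =
      {e₀} ∪ (branchEdges G a b ∪ branchEdges G b a) := by
    ext e
    simp only [Finset.mem_univ, Finset.mem_union, Finset.mem_singleton, mem_branchEdges, true_iff]
    by_cases h : (e : Sym2 V) = s(a, b)
    · exact Or.inl (Subtype.ext (h.trans he₀.symm))
    · exact Or.inr (branchE_or hG e h)
  have hEd : Disjoint (branchEdges G a b) (branchEdges G b a) :=
    Finset.disjoint_left.mpr fun x h h' =>
      branchE_disjoint hG hab (mem_branchEdges.mp h) (mem_branchEdges.mp h')
  have hab₀ : ∀ e ∈ branchEdges G a b, (e : Sym2 V) ≠ s(a, b) :=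
    fun e h => ne_of_mem_branchE (mem_branchEdges.mp h)
  have hba₀ : ∀ e ∈ branchEdges G b a, (e : Sym2 V) ≠ s(a, b) :=
    fun e h => (mem_branchEdges.mp h).1
  have h₀ : e₀ ∉ branchEdges G a b ∪ branchEdges G b a := by
    rw [Finset.mem_union]
    rintro (h | h)
    · exact hab₀ _ h he₀
    · exact hba₀ _ h he₀
  have h₀d := Finset.disjoint_singleton_left.mpr h₀
  have hterm : netTerm A w Finset.univ Finset.univ = fun k => w e₀ (k e₀) *
      (netTerm A w (branchVerts G a b) (branchEdges G a b) k *
        netTerm A w (branchVerts G b a) (branchEdges G b a) k) := by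
    funext k
    unfold netTerm
    rw [hV, hE, Finset.prod_union hVd, Finset.prod_union h₀d, Finset.prod_union hEd,
      Finset.prod_singleton]
    ring
  rw [hterm, hE, pinSum_union B h₀d, pinSum_singleton]
  refine Finset.sum_congr rfl fun v _ => ?_
  rw [pinSum_const_mul, pinSum_mul B hEd, Function.update_self]
  · rfl
  · intro k l h
    refine netTerm_dependsOn hA a b fun e he => h e fun hec' => ?_
    rcases he with he | he
    · exact hba₀ _ hec' he
    · exact Finset.disjoint_left.mp hEd he hec'
  · intro k l h
    refine netTerm_dependsOn hA b a fun e he => h e fun hec' => ?_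
    rcases he with he | he
    · exact hab₀ _ hec' (by rw [he, Sym2.eq_swap])
    · exact Finset.disjoint_left.mp hEd hec' he
  · exact fun k l h => by rw [h e₀ h₀]

end Contraction

/-! ### Gram matrices and local orthogonality -/

section Gram

variable {V : Type*} [Fintype V] [DecidableEq V] {G : SimpleGraph V} [DecidableRel G.Adj]

/-- The bond ranges of the doubled network, whose bond values are pairs (conjugated copy,
plain copy). -/
def pairRange (net : VidalNet G) (e : G.edgeSet) : Finset (ℕ × ℕ) :=
  Finset.range (net.d e) ×ˢ Finset.range (net.d e)

/-- The tensor of the doubled network at `c`: the overlap of `Γ_c` with itself, summed over the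
physical index. -/
def pairTensor (net : VidalNet G) (c : V) (q : G.edgeSet → ℕ × ℕ) : ℂ :=
  ∑ s : Fin 2, (starRingEnd ℂ) (net.Γ c s fun e => (q e.1).1) * net.Γ c s fun e => (q e.1).2

/-- The edge weights of the doubled network. -/
def pairWeight (net : VidalNet G) (e : G.edgeSet) (p : ℕ × ℕ) : ℂ :=
  (net.lam e p.1 : ℂ) * (net.lam e p.2 : ℂ)

lemma pairTensor_dependsOn {V : Type*} {G : SimpleGraph V} [DecidableRel G.Adj]
    (net : VidalNet G) (c : V) : DependsOn (pairTensor net c) {e | c ∈ (e : Sym2 V)} := by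
  intro q r h
  unfold pairTensor
  have h1 : (fun e : {e : G.edgeSet // c ∈ (e : Sym2 V)} => (q e.1).1) = fun e => (r e.1).1 :=
    funext fun e => by rw [h e.1 e.2]
  have h2 : (fun e : {e : G.edgeSet // c ∈ (e : Sym2 V)} => (q e.1).2) = fun e => (r e.1).2 :=
    funext fun e => by rw [h e.1 e.2]
  rw [h1, h2]

open scoped Classical in
/-- The Schmidt vector as a pinned sum, the index of `{a,b}` being read off from `x`. -/
lemma schmidt_eq (net : VidalNet G) {a b : V} {e₀ : G.edgeSet} (he₀ : (e₀ : Sym2 V) = s(a, b))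
    (x : G.edgeSet → ℕ) (i : {c : V // c ∈ branchV G b a} → Fin 2) :
    net.schmidt a b (x e₀) i = pinSum (fun e => Finset.range (net.d e)) (branchEdges G a b)
      (fun k => (∏ c : {c : V // c ∈ branchV G b a}, net.Γ c.1 (i c) fun e => k e.1) *
        ∏ e ∈ branchEdges G a b, (net.lam e (k e) : ℂ)) x := by
  rw [branchEdges, ← sum_subtype_eq_pinSum]
  unfold VidalNet.schmidt
  refine Finset.sum_congr (by congr!) fun k _ => ?_
  congr 1
  · refine Finset.prod_congr (by congr!) fun c _ => ?_
    congr 1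
    funext e
    by_cases h : (e.1 : Sym2 V) = s(a, b)
    · have hn : e₀ ∉ branchE G b a := fun h' => ne_of_mem_branchE h' he₀
      have : e.1 = e₀ := Subtype.ext (h.trans he₀.symm)
      simp only [this, he₀, if_true, dif_neg hn]
    · have hm : e.1 ∈ branchE G b a := mem_branchE_of_mem c.2 e.2 h
      simp only [h, if_false, dif_pos hm]
  · rw [Finset.prod_subtype (p := (· ∈ branchE G b a)) _ (fun e => by simp)]
    refine Finset.prod_congr (by congr!) fun e _ => ?_
    beta_reduce
    rw [dif_pos e.2]

open scoped Classical in
/-- The Gram matrix of the Schmidt vectors is the branch contraction of the doubled network. -/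
lemma gram_eq (net : VidalNet G) {a b : V} {e₀ : G.edgeSet} (he₀ : (e₀ : Sym2 V) = s(a, b))
    (x : G.edgeSet → ℕ × ℕ) :
    (∑ i : ({c : V // c ∈ branchV G b a} → Fin 2),
      (starRingEnd ℂ) (net.schmidt a b (x e₀).1 i) * net.schmidt a b (x e₀).2 i) =
      branchSum (pairTensor net) (pairWeight net) (pairRange net) a b x := by
  have h1 := schmidt_eq net he₀ (fun e => (x e).1)
  have h2 := schmidt_eq net he₀ (fun e => (x e).2)
  simp only [h1, h2]
  unfold branchSum
  have := sum_pinned_prod (fun e => Finset.range (net.d e)) (branchEdges G a b)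
    (fun k l => netTerm (pairTensor net) (pairWeight net) (branchVerts G a b) (branchEdges G a b)
      (fun e => (k e, l e))) (fun e => (x e).1) (fun e => (x e).2)
  refine Eq.trans ?_ this
  simp only [pinSum, map_sum, Finset.sum_mul_sum]
  rw [Finset.sum_comm]
  refine Finset.sum_congr rfl fun k _ => ?_
  rw [Finset.sum_comm]
  refine Finset.sum_congr rfl fun l _ => ?_
  have hp : ∏ c ∈ branchVerts G a b, pairTensor net c (fun e => (k e, l e)) =
      ∑ i : ({c : V // c ∈ branchV G b a} → Fin 2), ∏ c : {c : V // c ∈ branchV G b a},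
        ((starRingEnd ℂ) (net.Γ c.1 (i c) fun e => k e.1) * net.Γ c.1 (i c) fun e => l e.1) := by
    rw [Finset.prod_subtype (p := (· ∈ branchV G b a)) _ (fun c => mem_branchVerts)]
    unfold pairTensor
    rw [Finset.prod_univ_sum, Fintype.piFinset_univ]
  unfold netTerm
  rw [hp, Finset.sum_mul]
  refine Finset.sum_congr rfl fun i _ => ?_
  simp only [map_mul, map_prod, Complex.conj_ofReal, pairWeight, Finset.prod_mul_distrib]
  ring

/-- The right-hand side of the local orthogonality condition, as a sum over the diagonal bond
assignments of the doubled network. -/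
noncomputable def localSum (net : VidalNet G) (a b : V) (x : G.edgeSet → ℕ × ℕ) : ℂ :=
  pinSum (pairRange net) (otherEdges G a b) (fun k =>
    (pairTensor net a k * ∏ e ∈ otherEdges G a b, pairWeight net e (k e)) *
      if ∀ e ∈ otherEdges G a b, (k e).1 = (k e).2 then 1 else 0) x

lemma localSum_eq (net : VidalNet G) {a b : V} {e₀ : G.edgeSet} (he₀ : (e₀ : Sym2 V) = s(a, b))
    (x : G.edgeSet → ℕ × ℕ) :
    localSum net a b x =
      ∑ ia : Fin 2,
        ∑ g ∈ Fintype.piFinset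
            (fun e : {e : {e : G.edgeSet // a ∈ (e : Sym2 V)} // (e.1 : Sym2 V) ≠ s(a, b)} =>
              Finset.range (net.d e.1.1)),
          net.Γ a ia (fun e => if h : (e.1 : Sym2 V) = s(a, b) then (x e₀).2 else g ⟨e, h⟩) *
            (starRingEnd ℂ)
              (net.Γ a ia (fun e => if h : (e.1 : Sym2 V) = s(a, b) then (x e₀).1 else g ⟨e, h⟩)) *
            ∏ e : {e : {e : G.edgeSet // a ∈ (e : Sym2 V)} // (e.1 : Sym2 V) ≠ s(a, b)},
              ((net.lam e.1.1 (g e) : ℂ)) ^ 2 := by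
  rw [Finset.sum_comm]
  symm
  unfold localSum pinSum
  refine Finset.sum_of_injOn (fun g e =>
    if h : a ∈ (e : Sym2 V) ∧ (e : Sym2 V) ≠ s(a, b) then (g ⟨⟨e, h.1⟩, h.2⟩, g ⟨⟨e, h.1⟩, h.2⟩)
      else x e) ?_ ?_ ?_ ?_
  · intro g _ g' _ h
    funext e
    have := congrFun h e.1.1
    simp only [e.1.2, e.2, ne_eq, not_false_eq_true, and_self, dite_true] at this
    exact congrArg Prod.fst this
  · intro g hg
    rw [Finset.mem_coe, Fintype.mem_piFinset] at hg
    rw [Finset.mem_coe, mem_pinned]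
    refine ⟨fun e he => ?_, fun e he => ?_⟩
    · rw [mem_otherEdges] at he
      have := hg ⟨⟨e, he.1⟩, he.2⟩
      beta_reduce
      rw [dif_pos he]
      exact Finset.mem_product.mpr ⟨this, this⟩
    · rw [mem_otherEdges] at he
      exact dif_neg he
  · intro q hq hn
    rw [mem_pinned] at hq
    rw [if_neg, mul_zero]
    intro hdiag
    refine hn ⟨fun e => (q e.1.1).1, ?_, ?_⟩
    · rw [Finset.mem_coe, Fintype.mem_piFinset]
      exact fun e => (Finset.mem_product.mp
        (hq.1 e.1.1 (mem_otherEdges.mpr ⟨e.1.2, e.2⟩))).1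
    · funext e
      by_cases h : a ∈ (e : Sym2 V) ∧ (e : Sym2 V) ≠ s(a, b)
      · simp only [dif_pos h]
        exact Prod.ext rfl (hdiag e (mem_otherEdges.mpr h))
      · simp only [dif_neg h]
        exact (hq.2 e (fun h' => h (mem_otherEdges.mp h'))).symm
  · intro g hg
    rw [if_pos, mul_one, ← Finset.sum_mul]
    · congr 1
      · unfold pairTensor
        refine Finset.sum_congr rfl fun s _ => ?_
        rw [mul_comm]
        congr 1
        · congr 2
          funext e
          by_cases h : (e.1 : Sym2 V) = s(a, b)
          · have : e.1 = e₀ := Subtype.ext (h.trans he₀.symm)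
            simp [this, he₀]
          · simp [h, e.2]
        · congr 1
          funext e
          by_cases h : (e.1 : Sym2 V) = s(a, b)
          · have : e.1 = e₀ := Subtype.ext (h.trans he₀.symm)
            simp [this, he₀]
          · simp [h, e.2]
      · refine Finset.prod_bij (fun e _ => e.1.1) ?_ ?_ ?_ ?_
        · exact fun e _ => mem_otherEdges.mpr ⟨e.1.2, e.2⟩
        · exact fun e _ e' _ h => Subtype.ext (Subtype.ext h)
        · intro e he
          rw [mem_otherEdges] at he
          exact ⟨⟨⟨e, he.1⟩, he.2⟩, Finset.mem_univ _, rfl⟩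
        · intro e _
          have h : a ∈ (e.1.1 : Sym2 V) ∧ (e.1.1 : Sym2 V) ≠ s(a, b) := ⟨e.1.2, e.2⟩
          beta_reduce
          rw [dif_pos h, pairWeight, sq]
    · intro e he
      rw [mem_otherEdges] at he
      simp only [dif_pos he]

/-- The branch Gram matrix of `a→b` is the identity. -/
def BranchOrtho (net : VidalNet G) {a b : V} (hab : G.Adj a b) : Prop :=
  ∀ x : G.edgeSet → ℕ × ℕ, x ⟨s(a, b), hab⟩ ∈ pairRange net ⟨s(a, b), hab⟩ →
    branchSum (pairTensor net) (pairWeight net) (pairRange net) a b x =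
      if (x ⟨s(a, b), hab⟩).1 = (x ⟨s(a, b), hab⟩).2 then 1 else 0

/-- If all branches entering `a` other than the one through `b` have identity Gram matrix, then
the Gram matrix of the branch `a→b` is the local one. -/
lemma branchSum_eq_localSum (hG : G.IsTree) (net : VidalNet G) {a b : V} (hab : G.Adj a b)
    (h : ∀ c (hc : G.Adj c a), c ≠ b → BranchOrtho net hc) (x : G.edgeSet → ℕ × ℕ) :
    branchSum (pairTensor net) (pairWeight net) (pairRange net) a b x = localSum net a b x := by
  rw [branchSum_eq hG (pairTensor_dependsOn net) hab]
  refine pinSum_congr _ fun k hk => ?_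
  rw [mem_pinned] at hk
  congr 1
  have hmem : ∀ c (hc : G.Adj c a), c ≠ b →
      (⟨s(c, a), hc⟩ : G.edgeSet) ∈ otherEdges G a b := by
    intro c hc hcb
    refine mem_otherEdges.mpr ⟨by simp, fun h' => ?_⟩
    rcases Sym2.eq_iff.mp h' with ⟨h1, _⟩ | ⟨h1, _⟩
    · exact hc.ne h1
    · exact hcb h1
  by_cases hdiag : ∀ e ∈ otherEdges G a b, (k e).1 = (k e).2
  · rw [if_pos hdiag]
    refine Finset.prod_eq_one fun c hc => ?_
    obtain ⟨hca, hcb⟩ := mem_otherNbrs.mp hc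
    have hm := hmem c hca.symm hcb
    rw [h c hca.symm hcb k (hk.1 _ hm), if_pos (hdiag _ hm)]
  · rw [if_neg hdiag]
    push Not at hdiag
    obtain ⟨⟨e, heG⟩, he, hne⟩ := hdiag
    obtain ⟨hae, hab'⟩ := mem_otherEdges.mp he
    obtain ⟨c, rfl⟩ := Sym2.mem_iff_exists.mp hae
    have hac : G.Adj a c := heG
    have hcb : c ≠ b := by rintro rfl; exact hab' rfl
    refine Finset.prod_eq_zero (mem_otherNbrs.mpr ⟨hac, hcb⟩) ?_
    have hee : (⟨s(c, a), hac.symm⟩ : G.edgeSet) = ⟨s(a, c), heG⟩ := Subtype.ext Sym2.eq_swap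
    rw [h c hac.symm hcb k (hk.1 _ (hmem c hac.symm hcb)), hee, if_neg hne]

/-- The local orthogonality condition is the statement that the local Gram matrix is the
identity. -/
lemma localOrtho_iff (net : VidalNet G) {a b : V} (hab : G.Adj a b) :
    net.LocalOrtho hab ↔
      ∀ x : G.edgeSet → ℕ × ℕ, x ⟨s(a, b), hab⟩ ∈ pairRange net ⟨s(a, b), hab⟩ →
        localSum net a b x = if (x ⟨s(a, b), hab⟩).1 = (x ⟨s(a, b), hab⟩).2 then 1 else 0 := by
  constructor
  · intro h x hx
    obtain ⟨h1, h2⟩ := Finset.mem_product.mp hx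
    rw [localSum_eq net (e₀ := ⟨s(a, b), hab⟩) rfl,
      ← h _ _ (Finset.mem_range.mp h2) (Finset.mem_range.mp h1)]
    simp only [eq_comm]
  · intro h j j' hj hj'
    have := h (fun _ => (j', j))
      (Finset.mem_product.mpr ⟨Finset.mem_range.mpr hj', Finset.mem_range.mpr hj⟩)
    rw [localSum_eq net (e₀ := ⟨s(a, b), hab⟩) rfl] at this
    rw [this]
    simp only [eq_comm]

/-- Induction on the size of the branch: local orthogonality everywhere makes all branch Gram
matrices the identity. -/
lemma branchOrtho_of_localOrtho (hG : G.IsTree) (net : VidalNet G)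
    (h : ∀ a b : V, ∀ hab : G.Adj a b, net.LocalOrtho hab) (n : ℕ) :
    ∀ a b : V, ∀ hab : G.Adj a b, (branchVerts G a b).card = n → BranchOrtho net hab := by
  induction n using Nat.strong_induction_on with
  | _ n ih =>
    rintro a b hab rfl x hx
    rw [branchSum_eq_localSum hG net hab]
    · exact (localOrtho_iff net hab).mp (h a b hab) x hx
    · intro c hc hcb
      refine ih _ (Finset.card_lt_card ?_) c a hc rfl
      rw [Finset.ssubset_iff_of_subset fun y hy => mem_branchVerts.mpr
        (branchV_subset hG hab hc.symm hcb (mem_branchVerts.mp hy))]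
      exact ⟨a, mem_branchVerts.mpr (self_mem_branchV a b),
        fun h' => notMem_branchV hG hc (mem_branchVerts.mp h')⟩

lemma branchOrtho_iff_localOrtho (hG : G.IsTree) (net : VidalNet G) :
    (∀ a b : V, ∀ hab : G.Adj a b, BranchOrtho net hab) ↔
      ∀ a b : V, ∀ hab : G.Adj a b, net.LocalOrtho hab := by
  constructor
  · intro h a b hab
    refine (localOrtho_iff net hab).mpr fun x hx => ?_
    rw [← branchSum_eq_localSum hG net hab fun c hc _ => h c a hc]
    exact h a b hab x hx
  · exact fun h a b hab => branchOrtho_of_localOrtho hG net h _ a b hab rfl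

open scoped Classical in
lemma branchOrtho_iff (net : VidalNet G) {a b : V} (hab : G.Adj a b) :
    BranchOrtho net hab ↔ ∀ j j' : ℕ, j < net.d ⟨s(a, b), hab⟩ → j' < net.d ⟨s(a, b), hab⟩ →
      (∑ i : ({c : V // c ∈ branchV G b a} → Fin 2),
        (starRingEnd ℂ) (net.schmidt a b j i) * net.schmidt a b j' i)
          = if j = j' then 1 else 0 := by
  constructor
  · intro h j j' hj hj'
    have := h (fun _ => (j, j'))
      (Finset.mem_product.mpr ⟨Finset.mem_range.mpr hj, Finset.mem_range.mpr hj'⟩)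
    rw [← gram_eq net (e₀ := ⟨s(a, b), hab⟩) rfl] at this
    simpa using this
  · intro h x hx
    obtain ⟨h1, h2⟩ := Finset.mem_product.mp hx
    rw [← gram_eq net (e₀ := ⟨s(a, b), hab⟩) rfl]
    exact h _ _ (Finset.mem_range.mp h1) (Finset.mem_range.mp h2)

/-- The Schmidt expansion of the state across the edge `{a,b}`. -/
lemma psi_eq (hG : G.IsTree) (net : VidalNet G) {a b : V} (hab : G.Adj a b) (i : V → Fin 2) :
    net.psi i = ∑ jj ∈ Finset.range (net.d ⟨s(a, b), hab⟩),
      (net.lam ⟨s(a, b), hab⟩ jj : ℂ) *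
        net.schmidt a b jj (fun c => i c.1) * net.schmidt b a jj (fun c => i c.1) := by
  classical
  set A : V → (G.edgeSet → ℕ) → ℂ := fun c k => net.Γ c (i c) fun e => k e.1 with hAdef
  set w : G.edgeSet → ℕ → ℂ := fun e n => (net.lam e n : ℂ) with hw
  set B : G.edgeSet → Finset ℕ := fun e => Finset.range (net.d e) with hB
  have hA : ∀ c, DependsOn (A c) {e | c ∈ (e : Sym2 V)} := fun c k l h =>
    congrArg (net.Γ c (i c)) (funext fun e => h e.1 e.2)
  have hs : ∀ a b : V, ∀ e₀ : G.edgeSet, (e₀ : Sym2 V) = s(a, b) → ∀ x : G.edgeSet → ℕ,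
      net.schmidt a b (x e₀) (fun c => i c.1) = branchSum A w B a b x := by
    intro a b e₀ he₀ x
    rw [schmidt_eq net he₀]
    refine pinSum_congr _ fun k _ => ?_
    unfold netTerm
    rw [Finset.prod_subtype (p := (· ∈ branchV G b a)) (branchVerts G a b)
      (fun c => mem_branchVerts)]
  have hpsi : net.psi i = pinSum B Finset.univ (netTerm A w Finset.univ Finset.univ)
      (fun _ => 0) := by
    simp [VidalNet.psi, pinSum, pinned, netTerm, hAdef, hw, hB]
  rw [hpsi, pinSum_univ_eq hG hA ⟨s(a, b), hab⟩ rfl]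
  refine Finset.sum_congr rfl fun v _ => ?_
  rw [← hs a b ⟨s(a, b), hab⟩ rfl, ← hs b a ⟨s(a, b), hab⟩ Sym2.eq_swap, Function.update_self]
  ring

end Gram

open scoped Classical in
/-- For a graph tensor network in Vidal form on a finite tree, the family of
Schmidt vectors `{u_{a→b}(j)}_{j<d_ab}` is orthonormal for every directed edge `a→b` if and
only if the local orthogonality condition holds at every directed edge. Moreover, under the
local orthogonality condition, for every edge `{a,b}` the state factorizes as the Schmidt
expansion `Ψ = Σ_j λ_ab[j]·u_{a→b}(j) ⊗ u_{b→a}(j)` (under the natural identification of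
`⨂_{c∈V}ℂ²` with the tensor product of the two sides of the cut). -/
theorem schmidt_orthonormal_iff_localOrtho
    {V : Type*} [Fintype V] [DecidableEq V] {G : SimpleGraph V} [DecidableRel G.Adj]
    (hG : G.IsTree) (net : VidalNet G) :
    ((∀ a b : V, ∀ hab : G.Adj a b, ∀ j j' : ℕ,
        j < net.d ⟨s(a, b), (SimpleGraph.mem_edgeSet G).mpr hab⟩ →
        j' < net.d ⟨s(a, b), (SimpleGraph.mem_edgeSet G).mpr hab⟩ →
        (∑ i : ({c : V // c ∈ branchV G b a} → Fin 2),
            (starRingEnd ℂ) (net.schmidt a b j i) * net.schmidt a b j' i)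
          = if j = j' then 1 else 0) ↔
      (∀ a b : V, ∀ hab : G.Adj a b, net.LocalOrtho hab)) ∧
    ((∀ a b : V, ∀ hab : G.Adj a b, net.LocalOrtho hab) →
      ∀ a b : V, ∀ hab : G.Adj a b, ∀ i : V → Fin 2,
        net.psi i =
          ∑ jj ∈ Finset.range (net.d ⟨s(a, b), (SimpleGraph.mem_edgeSet G).mpr hab⟩),
            (net.lam ⟨s(a, b), (SimpleGraph.mem_edgeSet G).mpr hab⟩ jj : ℂ) *
              net.schmidt a b jj (fun c => i c.1) * net.schmidt b a jj (fun c => i c.1)) := by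
  refine ⟨?_, fun _ a b hab i => psi_eq hG net hab i⟩
  rw [← branchOrtho_iff_localOrtho hG net]
  exact forall_congr' fun a => forall_congr' fun b => forall_congr' fun hab =>
    (branchOrtho_iff net hab).symm
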